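/- Let g be a positive integer, let (G,σ) be a connected g-wide signed graph, and let x,y be vertices of (G,σ) lying on a common negative cycle of length g with ad_{(G,σ)}(x,y) = p < 0. Then ad_{EDC(G,σ)}(x⁺,y⁻) = ad_{EDC(G,σ)}(x⁻,y⁺) = −p. Moreover, if d_G(x,y) = ⌊g/2⌋, then ad_{EDC(G,σ)}(x⁺,y⁺) = ad_{EDC(G,σ)}(x⁻,y⁻) = g + p = ⌈g/2⌉; otherwise ad_{EDC(G,σ)}(x⁺,y⁺) = ad_{EDC(G,σ)}(x⁻,y⁻) = p − 1. -/

import Mathlib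

open SimpleGraph

namespace SignedPaper

variable {V : Type*} {W : Type*}

/-- The product of the signs (values of `σ`) along the darts of a walk. -/
def walkSign {G : SimpleGraph V} (σ : V → V → ℤ) {a b : V} (w : G.Walk a b) : ℤ :=
  (w.darts.map fun d => σ d.toProd.1 d.toProd.2).prod

/-- The length of a walk in a weighted signed graph: the sum of the absolute
values of the weights of its edges, with multiplicity. -/
def walkWLen {G : SimpleGraph V} (ω : V → V → ℤ) {a b : V} (w : G.Walk a b) : ℕ :=
  (w.darts.map fun d => (ω d.toProd.1 d.toProd.2).natAbs).sum

/-- Walk-girth of type `ij` of a signed graph: the length of a shortest closed walk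
which is negative iff `neg` and of odd length iff `odd` (`⊤` if none exists). -/
noncomputable def sGirth (G : SimpleGraph V) (σ : V → V → ℤ) (neg odd : Bool) : ℕ∞ :=
  sInf {n : ℕ∞ | ∃ (a : V) (w : G.Walk a a), (w.length : ℕ∞) = n ∧
    (walkSign σ w < 0 ↔ neg = true) ∧ (Odd w.length ↔ odd = true)}

/-- Walk-girth of type `ij` of a weighted signed graph. -/
noncomputable def wGirth (G : SimpleGraph V) (ω : V → V → ℤ) (neg odd : Bool) : ℕ∞ :=
  sInf {n : ℕ∞ | ∃ (a : V) (w : G.Walk a a), (walkWLen ω w : ℕ∞) = n ∧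
    (walkSign ω w < 0 ↔ neg = true) ∧ (Odd (walkWLen ω w) ↔ odd = true)}

/-- A graph homomorphism is a homomorphism of signed graphs if it preserves
the signs of all closed walks. -/
def IsSignedHom {G : SimpleGraph V} {H : SimpleGraph W} (σ : V → V → ℤ) (π : W → W → ℤ)
    (f : G →g H) : Prop :=
  ∀ (a : V) (w : G.Walk a a), walkSign π (w.map f) = walkSign σ w

/-- A signed graph is `g`-wide if it has no positive closed walk of odd length, and
every negative closed walk has length at least `g` and of the same parity as `g`. -/
def gWide (G : SimpleGraph V) (σ : V → V → ℤ) (g : ℕ) : Prop :=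
  (∀ (a : V) (w : G.Walk a a), 0 < walkSign σ w → ¬ Odd w.length) ∧
  (∀ (a : V) (w : G.Walk a a), walkSign σ w < 0 → g ≤ w.length ∧ (Odd w.length ↔ Odd g))

open Classical in
/-- The algebraic distance between two vertices of a signed graph. -/
noncomputable def adist (G : SimpleGraph V) (σ : V → V → ℤ) (u v : V) : ℤ :=
  if ∃ w : G.Walk u v, w.IsPath ∧ w.length = G.dist u v ∧ 0 < walkSign σ w
  then (G.dist u v : ℤ) else -(G.dist u v : ℤ)

/-- The underlying graph of the Extended Double Cover of a signed graph:
`(v, true)` plays the role of `v⁺` and `(v, false)` of `v⁻`. -/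
def EDCsg (G : SimpleGraph V) (σ : V → V → ℤ) (hσ : ∀ u v, σ u v = σ v u) :
    SimpleGraph (V × Bool) where
  Adj x y := (x.1 = y.1 ∧ x.2 ≠ y.2) ∨ (G.Adj x.1 y.1 ∧ (x.2 = y.2 ↔ 0 < σ x.1 y.1))
  symm.symm := fun x y h => by
    rcases h with ⟨h1, h2⟩ | ⟨ha, hb⟩
    · exact Or.inl ⟨h1.symm, h2.symm⟩
    · refine Or.inr ⟨ha.symm, ?_⟩
      rw [hσ y.1 x.1, eq_comm]
      exact hb
  loopless.irrefl := fun x h => by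
    rcases h with ⟨-, h⟩ | ⟨h, -⟩
    · exact h rfl
    · exact G.loopless.irrefl _ h

open Classical in
/-- The signature of the Extended Double Cover: edges `v⁺v⁻` are negative,
all other edges are positive. -/
noncomputable def edcSign : V × Bool → V × Bool → ℤ := fun x y =>
  if x.1 = y.1 then -1 else 1

/-- The underlying graph of the Extended Double Cover of a weighted signed graph. -/
def EDCw (G : SimpleGraph V) : SimpleGraph (V × Bool) where
  Adj x y := (x.1 = y.1 ∧ x.2 ≠ y.2) ∨ G.Adj x.1 y.1
  symm.symm := fun x y h => by
    rcases h with ⟨h1, h2⟩ | h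
    · exact Or.inl ⟨h1.symm, h2.symm⟩
    · exact Or.inr h.symm
  loopless.irrefl := fun x h => by
    rcases h with ⟨-, h⟩ | h
    · exact h rfl
    · exact G.loopless.irrefl _ h

open Classical in
/-- The weights of the Extended Double Cover of a weighted signed graph `(G, ω)`. -/
noncomputable def EDCwWeight (ω : V → V → ℤ) : V × Bool → V × Bool → ℤ := fun x y =>
  if x.1 = y.1 then -1
  else if x.2 = y.2 then (if 0 < ω x.1 y.1 then ω x.1 y.1 else ω x.1 y.1 - 1)
  else (if 0 < ω x.1 y.1 then -(ω x.1 y.1 + 1) else -(ω x.1 y.1))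

/-- `G` has a `K₄`-minor: there are four disjoint nonempty connected branch sets,
pairwise joined by an edge. -/
def HasK4Minor (G : SimpleGraph V) : Prop :=
  ∃ S : Fin 4 → Set V,
    (∀ i, (G.induce (S i)).Connected) ∧
    (∀ i j, i ≠ j → Disjoint (S i) (S j)) ∧
    (∀ i j, i ≠ j → ∃ u ∈ S i, ∃ v ∈ S j, G.Adj u v)

/-- A signed graph `(B, π)` is SP-complete if every connected signed graph whose
underlying graph is finite and `K₄`-minor-free and which satisfies the conclusion of
the no-homomorphism lemma with respect to `(B, π)` admits a homomorphism to `(B, π)`. -/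
def SPComplete (B : SimpleGraph W) (π : W → W → ℤ) : Prop :=
  ∀ (V' : Type) (G : SimpleGraph V') (σ : V' → V' → ℤ),
    Finite V' → (∀ u v, σ u v = σ v u) →
    (∀ u v, G.Adj u v → σ u v = 1 ∨ σ u v = -1) →
    G.Connected → ¬ HasK4Minor G →
    (∀ neg odd : Bool, sGirth B π neg odd ≤ sGirth G σ neg odd) →
    ∃ f : G →g B, IsSignedHom σ π f

/-- The cylinder `C_{2a} □ P_b` on vertex set `{0,…,2a-1} × {0,…,b-1}`. -/
def cylT (a b : ℕ) : SimpleGraph (Fin (2 * a) × Fin b) where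
  Adj x y := (x.1 = y.1 ∧ ((x.2.val : ℤ) - (y.2.val : ℤ)).natAbs = 1) ∨
    (x.2 = y.2 ∧ (((x.1.val : ℤ) - (y.1.val : ℤ)).natAbs = 1 ∨
      ((x.1.val : ℤ) - (y.1.val : ℤ)).natAbs = 2 * a - 1))
  symm.symm := fun x y h => by
    rcases h with ⟨h1, h2⟩ | ⟨h1, h2 | h2⟩
    · exact Or.inl ⟨h1.symm, by omega⟩
    · exact Or.inr ⟨h1.symm, Or.inl (by omega)⟩
    · exact Or.inr ⟨h1.symm, Or.inr (by omega)⟩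
  loopless.irrefl := fun x h => by
    have hpos : 0 < 2 * a := x.1.pos
    rcases h with ⟨-, h⟩ | ⟨-, h | h⟩ <;> omega

/-- Two vertices of the cylinder are antipodal if `|Δi| + |Δj| = a + b - 1`. -/
def antip (a b : ℕ) (x y : Fin (2 * a) × Fin b) : Prop :=
  ((x.1.val : ℤ) - (y.1.val : ℤ)).natAbs + ((x.2.val : ℤ) - (y.2.val : ℤ)).natAbs = a + b - 1

/-- The twisted tube: the cylinder together with the antipodal edges `J`. -/
def twistedTube (a b : ℕ) : SimpleGraph (Fin (2 * a) × Fin b) where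
  Adj x y := (cylT a b).Adj x y ∨ (x ≠ y ∧ antip a b x y)
  symm.symm := fun x y h => by
    rcases h with h | ⟨hne, h⟩
    · exact Or.inl ((cylT a b).symm.symm _ _ h)
    · refine Or.inr ⟨hne.symm, ?_⟩
      unfold antip at h ⊢
      omega
  loopless.irrefl := fun x h => by
    rcases h with h | ⟨hne, -⟩
    · exact (cylT a b).loopless.irrefl x h
    · exact hne rfl

/-- The signature of the twisted tube: antipodal edges (the set `J`) are negative,
all other edges are positive. -/
def ttSign (a b : ℕ) (x y : Fin (2 * a) × Fin b) : ℤ :=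
  if ((x.1.val : ℤ) - (y.1.val : ℤ)).natAbs + ((x.2.val : ℤ) - (y.2.val : ℤ)).natAbs
      = a + b - 1 then -1 else 1

/-- The underlying graph of the signed projective cube `SPC(k)`: vertices are elements
of `ℤ₂^k`, adjacent if they differ in exactly one coordinate or in all coordinates. -/
def spcGraph (k : ℕ) : SimpleGraph (Fin k → ZMod 2) where
  Adj x y := x ≠ y ∧ (hammingDist x y = 1 ∨ hammingDist x y = k)
  symm.symm := fun x y h => ⟨h.1.symm, by rw [hammingDist_comm]; exact h.2⟩
  loopless.irrefl := fun x h => h.1 rfl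

/-- The signature of `SPC(k)`: an edge is negative iff its endpoints differ in
all coordinates. -/
def spcSign (k : ℕ) (x y : Fin k → ZMod 2) : ℤ :=
  if hammingDist x y = k then -1 else 1

lemma spcSign_symm (k : ℕ) : ∀ x y : Fin k → ZMod 2, spcSign k x y = spcSign k y x := by
  intro x y
  unfold spcSign
  rw [hammingDist_comm]

/-- The function `f_g`. -/
def fg (g : ℕ) (x : ℤ) : ℤ := if 0 < x then x else (g : ℤ) + x

/-- `(G, σ)` is (a realization of) the signed graph `T_g(p,q,r)`: three distinguished
vertices `x, y, z` joined by six internally disjoint paths of prescribed lengths and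
signs, whose edges exhaust `G`. -/
def IsTgpqr (G : SimpleGraph V) (σ : V → V → ℤ) (g : ℕ) (p q r : ℤ) : Prop :=
  ∃ (x y z : V) (P1 P2 : G.Walk x y) (Q1 Q2 : G.Walk y z) (R1 R2 : G.Walk z x),
    x ≠ y ∧ y ≠ z ∧ z ≠ x ∧
    P1.IsPath ∧ P2.IsPath ∧ Q1.IsPath ∧ Q2.IsPath ∧ R1.IsPath ∧ R2.IsPath ∧
    P1.length = p.natAbs ∧ P2.length = g - p.natAbs ∧
    Q1.length = q.natAbs ∧ Q2.length = g - q.natAbs ∧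
    R1.length = r.natAbs ∧ R2.length = g - r.natAbs ∧
    walkSign σ P1 = Int.sign p ∧ walkSign σ P2 = -Int.sign p ∧
    walkSign σ Q1 = Int.sign q ∧ walkSign σ Q2 = -Int.sign q ∧
    walkSign σ R1 = Int.sign r ∧ walkSign σ R2 = -Int.sign r ∧
    (∀ e ∈ G.edgeSet, e ∈ P1.edges ∨ e ∈ P2.edges ∨ e ∈ Q1.edges ∨ e ∈ Q2.edges ∨
      e ∈ R1.edges ∨ e ∈ R2.edges) ∧
    (∀ i j : Fin 6, i ≠ j → ∀ v : V,
      v ∈ (![{v | v ∈ P1.support}, {v | v ∈ P2.support}, {v | v ∈ Q1.support},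
            {v | v ∈ Q2.support}, {v | v ∈ R1.support}, {v | v ∈ R2.support}] : Fin 6 → Set V) i →
      v ∈ (![{v | v ∈ P1.support}, {v | v ∈ P2.support}, {v | v ∈ Q1.support},
            {v | v ∈ Q2.support}, {v | v ∈ R1.support}, {v | v ∈ R2.support}] : Fin 6 → Set V) j →
      v = x ∨ v = y ∨ v = z)


theorem walkSign_nil' {G : SimpleGraph V} (σ : V → V → ℤ) (a : V) :
    walkSign σ (Walk.nil : G.Walk a a) = 1 := by simp [walkSign]

theorem walkSign_cons' {G : SimpleGraph V} (σ : V → V → ℤ) {a b c : V} (h : G.Adj a b)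
    (w : G.Walk b c) : walkSign σ (Walk.cons h w) = σ a b * walkSign σ w := by
  simp [walkSign]

theorem walkSign_append' {G : SimpleGraph V} (σ : V → V → ℤ) {a b c : V} (w : G.Walk a b)
    (w' : G.Walk b c) : walkSign σ (w.append w') = walkSign σ w * walkSign σ w' := by
  simp [walkSign]

theorem walkSign_reverse' {G : SimpleGraph V} (σ : V → V → ℤ) (hsymm : ∀ u v, σ u v = σ v u)
    {a b : V} (w : G.Walk a b) : walkSign σ w.reverse = walkSign σ w := by
  induction w with
  | nil => simp [walkSign]
  | cons h w ih =>
    rw [Walk.reverse_cons, walkSign_append', ih, walkSign_cons', walkSign_cons', walkSign_nil',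
      hsymm, mul_one, mul_comm]

theorem walkSign_pm {G : SimpleGraph V} (σ : V → V → ℤ)
    (hpm : ∀ u v, G.Adj u v → σ u v = 1 ∨ σ u v = -1)
    {a b : V} (w : G.Walk a b) : walkSign σ w = 1 ∨ walkSign σ w = -1 := by
  induction w with
  | nil => simp [walkSign]
  | cons h w ih =>
    rw [walkSign_cons']
    rcases hpm _ _ h with h1 | h1 <;> rcases ih with h2 | h2 <;> simp [h1, h2]

theorem edc_proj (G : SimpleGraph V) (σ : V → V → ℤ) (hsymm : ∀ u v, σ u v = σ v u)
    (hpm : ∀ u v, G.Adj u v → σ u v = 1 ∨ σ u v = -1) {u v : V × Bool}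
    (w : (EDCsg G σ hsymm).Walk u v) :
    ∃ (w' : G.Walk u.1 v.1) (k : ℕ), w.length = w'.length + k ∧
      walkSign edcSign w = (-1) ^ k ∧
      walkSign σ w' * (-1) ^ k = if u.2 = v.2 then 1 else -1 := by
  induction w with
  | nil => exact ⟨Walk.nil, 0, by simp [walkSign]⟩
  | @cons a b c h w ih =>
    obtain ⟨w', k, h1, h2, h3⟩ := ih
    obtain ⟨a1, a2⟩ := a
    obtain ⟨b1, b2⟩ := b
    obtain ⟨c1, c2⟩ := c
    have h0 : ((a1, a2) : V × Bool).1 = ((b1, b2) : V × Bool).1 ∧ a2 ≠ b2 ∨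
        G.Adj a1 b1 ∧ (a2 = b2 ↔ 0 < σ a1 b1) := h
    rcases h0 with ⟨e, hne⟩ | ⟨ha, hb⟩
    · simp only at e hne
      subst e
      refine ⟨w', k + 1, ?_, ?_, ?_⟩
      · simp [h1]; ring
      · rw [walkSign_cons', h2]; simp [edcSign, pow_succ]
      · rw [pow_succ, ← mul_assoc, h3]
        cases a2 <;> cases b2 <;> cases c2 <;> simp_all
    · refine ⟨Walk.cons ha w', k, ?_, ?_, ?_⟩
      · simp [h1]; ring
      · rw [walkSign_cons', h2]; simp [edcSign, ha.ne]
      · rw [walkSign_cons', mul_assoc, h3]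
        rcases hpm _ _ ha with hh | hh <;> cases a2 <;> cases b2 <;> cases c2 <;> simp_all

theorem edc_lift (G : SimpleGraph V) (σ : V → V → ℤ) (hsymm : ∀ u v, σ u v = σ v u)
    (hpm : ∀ u v, G.Adj u v → σ u v = 1 ∨ σ u v = -1) {u v : V}
    (w : G.Walk u v) (a b : Bool) (hab : walkSign σ w = if a = b then 1 else -1) :
    ∃ W : (EDCsg G σ hsymm).Walk (u, a) (v, b), W.length = w.length ∧
      walkSign edcSign W = 1 := by
  induction w generalizing a with
  | nil =>
    have : a = b := by
      by_contra hne
      simp [walkSign, hne] at hab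
    subst this
    exact ⟨Walk.nil, by simp [walkSign]⟩
  | @cons u m v h w ih =>
    rw [walkSign_cons'] at hab
    rcases hpm _ _ h with hh | hh
    · obtain ⟨W, h1, h2⟩ := ih a (by simpa [hh] using hab)
      have hadj : (EDCsg G σ hsymm).Adj (u, a) (m, a) := Or.inr ⟨h, by simp [hh]⟩
      refine ⟨Walk.cons hadj W, by simp [h1], ?_⟩
      rw [walkSign_cons', h2]; simp [edcSign, h.ne]
    · obtain ⟨W, h1, h2⟩ := ih (!a) (by
        rw [hh] at hab
        cases a <;> cases b <;> simp at hab ⊢ <;> omega)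
      have hadj : (EDCsg G σ hsymm).Adj (u, a) (m, !a) := Or.inr ⟨h, by simp [hh]⟩
      refine ⟨Walk.cons hadj W, by simp [h1], ?_⟩
      rw [walkSign_cons', h2]; simp [edcSign, h.ne]

theorem dist_eq_of {G : SimpleGraph V} {u v : V} (w : G.Walk u v)
    (hmin : ∀ w' : G.Walk u v, w.length ≤ w'.length) : G.dist u v = w.length := by
  apply le_antisymm (dist_le w)
  obtain ⟨w', hw'⟩ := w.reachable.exists_walk_length_eq_dist
  rw [← hw']
  exact hmin w'

theorem adist_eq_pos {G : SimpleGraph V} (σ : V → V → ℤ) {u v : V} (w : G.Walk u v)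
    (hmin : ∀ w' : G.Walk u v, w.length ≤ w'.length) (hs : walkSign σ w = 1) :
    adist G σ u v = w.length := by
  have hd := dist_eq_of w hmin
  unfold adist
  rw [if_pos ⟨w, w.isPath_of_length_eq_dist hd.symm, hd.symm, by simp [hs]⟩, hd]

theorem adist_eq_neg {G : SimpleGraph V} (σ : V → V → ℤ) {u v : V} (w : G.Walk u v)
    (hmin : ∀ w' : G.Walk u v, w.length ≤ w'.length)
    (hs : ∀ w' : G.Walk u v, w'.length = w.length → walkSign σ w' = -1) :
    adist G σ u v = -(w.length : ℤ) := by
  have hd := dist_eq_of w hmin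
  unfold adist
  rw [if_neg, hd]
  rintro ⟨w', -, h1, h2⟩
  rw [hs w' (h1.trans hd)] at h2
  omega

/-- algebraic distances in the Extended Double Cover, for vertices
`x, y` on a common negative cycle of length `g` with `ad_{(G,σ)}(x,y) = p < 0`. -/
theorem adist_EDC_neg {V : Type*} [Fintype V]
    (G : SimpleGraph V) (σ : V → V → ℤ)
    (hsymm : ∀ u v, σ u v = σ v u) (hpm : ∀ u v, G.Adj u v → σ u v = 1 ∨ σ u v = -1)
    (g : ℕ) (hg : 0 < g) (hconn : G.Connected) (hwide : gWide G σ g)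
    (x y : V) (C : G.Walk x x) (hC : C.IsCycle) (hlen : C.length = g)
    (hy : y ∈ C.support) (hneg : walkSign σ C = -1)
    (p : ℤ) (hp : adist G σ x y = p) (hpneg : p < 0) :
    adist (EDCsg G σ hsymm) edcSign (x, true) (y, false) = -p ∧
    adist (EDCsg G σ hsymm) edcSign (x, false) (y, true) = -p ∧
    (G.dist x y = g / 2 →
      adist (EDCsg G σ hsymm) edcSign (x, true) (y, true) = (g : ℤ) + p ∧
      adist (EDCsg G σ hsymm) edcSign (x, false) (y, false) = (g : ℤ) + p ∧
      (g : ℤ) + p = (((g + 1) / 2 : ℕ) : ℤ)) ∧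
    (G.dist x y ≠ g / 2 →
      adist (EDCsg G σ hsymm) edcSign (x, true) (y, true) = p - 1 ∧
      adist (EDCsg G σ hsymm) edcSign (x, false) (y, false) = p - 1) := by
  classical
  -- all shortest walks are negative
  have hdp : p = -(G.dist x y : ℤ) ∧
      ∀ w : G.Walk x y, w.length = G.dist x y → walkSign σ w = -1 := by
    unfold adist at hp
    split_ifs at hp with h
    · omega
    · refine ⟨hp.symm, fun w hw => ?_⟩
      rcases walkSign_pm σ hpm w with h1 | h1
      · exact absurd ⟨w, w.isPath_of_length_eq_dist hw, hw, by simp [h1]⟩ h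
      · exact h1
  obtain ⟨hpd, hshort⟩ := hdp
  obtain ⟨P, hP⟩ := hconn.exists_walk_length_eq_dist x y
  have hPs := hshort P hP
  -- positive walks are long
  have hposlong : ∀ w : G.Walk x y, walkSign σ w = 1 → g ≤ w.length + G.dist x y := by
    intro w hw
    have := (hwide.2 x (w.append P.reverse) (by
      rw [walkSign_append', walkSign_reverse' σ hsymm, hw, hPs]; omega)).1
    simpa [hP] using this
  -- there is a positive walk of length g - d
  have hQ : ∃ Q : G.Walk x y, walkSign σ Q = 1 ∧ Q.length + G.dist x y = g := by
    have e := C.take_spec hy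
    have hl : (C.takeUntil y hy).length + (C.dropUntil y hy).length = g := by
      rw [← Walk.length_append, e, hlen]
    have hs : walkSign σ (C.takeUntil y hy) * walkSign σ (C.dropUntil y hy) = -1 := by
      rw [← walkSign_append', e, hneg]
    have hd1 := dist_le (C.takeUntil y hy)
    have hd2 := dist_le (C.dropUntil y hy).reverse
    have hr := walkSign_reverse' σ hsymm (C.dropUntil y hy)
    rw [Walk.length_reverse] at hd2
    rcases walkSign_pm σ hpm (C.takeUntil y hy) with h1 | h1
    · exact ⟨_, h1, by have := hposlong _ h1; omega⟩
    · rw [h1] at hs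
      have h2 : walkSign σ (C.dropUntil y hy).reverse = 1 := by omega
      refine ⟨_, h2, ?_⟩
      have := hposlong _ h2
      rw [Walk.length_reverse] at this ⊢
      omega
  obtain ⟨Q, hQs, hQl⟩ := hQ
  have hlt : 2 * G.dist x y < g := by
    have h1 := dist_le Q
    have h2 : Q.length ≠ G.dist x y := fun h => by
      have := hshort Q h
      omega
    omega
  have hlow : ∀ (a b : Bool) (w : (EDCsg G σ hsymm).Walk (x, a) (y, b)),
      G.dist x y ≤ w.length := by
    intro a b w
    obtain ⟨w', k, h1, -, -⟩ := edc_proj G σ hsymm hpm w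
    have := dist_le w'
    simp only at this
    omega
  have part1 : ∀ a b : Bool, a ≠ b → adist (EDCsg G σ hsymm) edcSign (x, a) (y, b) = -p := by
    intro a b hab
    obtain ⟨W, h1, h2⟩ := edc_lift G σ hsymm hpm P a b (by simp [hPs, hab])
    rw [adist_eq_pos edcSign W (fun w' => by rw [h1, hP]; exact hlow _ _ w') h2, h1, hP, hpd]
    simp
  have hlow2 : ∀ (a : Bool) (w : (EDCsg G σ hsymm).Walk (x, a) (y, a)),
      (G.dist x y + 1 ≤ w.length ∧ walkSign edcSign w = -1) ∨ g ≤ w.length + G.dist x y := by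
    intro a w
    obtain ⟨w', k, h1, h2, h3⟩ := edc_proj G σ hsymm hpm w
    have hd := dist_le w'
    simp only at hd
    rcases Nat.even_or_odd k with hk | hk
    · right
      rw [hk.neg_one_pow] at h3
      have := hposlong w' (by simpa using h3)
      omega
    · left
      have : k ≠ 0 := by rintro rfl; simp at hk
      exact ⟨by omega, by rw [h2, hk.neg_one_pow]⟩
  refine ⟨part1 _ _ (by simp), part1 _ _ (by simp), fun h => ?_, fun h => ?_⟩
  · have key : ∀ a : Bool, adist (EDCsg G σ hsymm) edcSign (x, a) (y, a) = (g : ℤ) + p := by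
      intro a
      obtain ⟨W, h1, h2⟩ := edc_lift G σ hsymm hpm Q a a (by simp [hQs])
      rw [adist_eq_pos edcSign W (fun w' => by
        rcases hlow2 a w' with h3 | h3 <;> omega) h2, h1, hpd]
      omega
    exact ⟨key _, key _, by omega⟩
  · have key : ∀ a : Bool, adist (EDCsg G σ hsymm) edcSign (x, a) (y, a) = p - 1 := by
      intro a
      obtain ⟨W, h1, h2⟩ := edc_lift G σ hsymm hpm P a (!a) (by simp [hPs])
      have hadj : (EDCsg G σ hsymm).Adj (y, !a) (y, a) := Or.inl ⟨rfl, by simp⟩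
      have hl : (W.append (Walk.cons hadj Walk.nil)).length = G.dist x y + 1 := by
        simp [h1, hP]
      rw [adist_eq_neg edcSign (W.append (Walk.cons hadj Walk.nil)) (fun w' => by
        rcases hlow2 a w' with h3 | h3 <;> omega) (fun w' hw' => by
        rcases hlow2 a w' with h3 | h3
        · exact h3.2
        · omega), hl, hpd]
      push_cast
      ring
    exact ⟨key _, key _⟩

end SignedPaper
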